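/- arXiv:0705.2404 — 3 statements merged into one kernel-verified Lean document; each statement's English description precedes it below -/
import Mathlib

section
/- Let G be a nonempty position of the octal game 4.7, let H = H_k be a heap of maximal size appearing in G, and let X be G with one copy of H_k removed (so G = X + H). Then G is a misère P-position if and only if one of the following holds: (i) t(G) = 0 and g(G) = 1; (ii) t(G) ≠ 0, w(H) ≤ t(X), and g(G) = 0; or (iii) t(G) ≠ 0, w(H) ≥ t(X) + 2, and g(G) = 3. -/
/-!
Write `S` for the total number of beans of a position, `C` for its number of heaps and `T` for its
`t`-value.  Every move changes the pair `(S mod 2, (S + C) mod 2)` in a way depending only on its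
kind: a split without removal flips the second bit, the move `h → h - 1` flips both, and the other
moves flip the first.  A heap of odd size (present when `S` is odd) allows the last
change, an even heap (present when `S + C` is odd) the other two; hence the normal-play Grundy value
is `grun G = S mod 2 + 2 * ((S + C) mod 2)` (`grundy_eq`).

For the misère outcome put `c(h) = w(h) + t(h)` for `h ≥ 5` and `c(h) = 0` for `h ≤ 4`.  As `c` is
monotone, the conditions of the theorem comparing the largest heap with the others become, when
`T ≠ 0`, that all heaps have `c(h) ≤ T` and that some heap has `c(h) ≥ T + 2`.  The resulting predicate
`Good` cuts out exactly the P-positions, because no move connects two good positions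
(`not_good_of_move`) and every nonempty position that is not good has a good option
(`exists_good_option`).  The first fact holds because the moves `h → h - 1`, the only ones that
change the Grundy value by `3`, change `T` by at most one, and because `T = 0` is reached from
`T ≠ 0` by removing a bean and splitting only from a heap `5` or `7` with threshold `T + 1`.
The second is an explicit strategy: one plays on the largest heap, balancing the pieces if that heap
dominates the rest, except for a few positions with small heaps and for positions where `T` has to
be lowered by one by a move `h → h - 1` elsewhere.
-/

/-- The minimum excludant of a set of naturals. -/
noncomputable def mex (s : Set ℕ) : ℕ := sInf {n | n ∉ s}

/-- One legal move in the octal game 4.7: split a heap into two nonempty heaps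
removing no beans; or remove 1 bean, either removing the whole heap, leaving
one nonempty heap, or splitting the remainder into two nonempty heaps.
Positions are finite multisets of heap sizes. -/
def Move47 (G G' : Multiset ℕ) : Prop :=
  (∃ k ∈ G, ∃ i j : ℕ, 1 ≤ i ∧ 1 ≤ j ∧ i + j = k ∧ G' = i ::ₘ j ::ₘ G.erase k) ∨
  (1 ∈ G ∧ G' = G.erase 1) ∨
  (∃ k ∈ G, 2 ≤ k ∧ G' = (k - 1) ::ₘ G.erase k) ∨
  (∃ k ∈ G, 3 ≤ k ∧ ∃ i j : ℕ, 1 ≤ i ∧ 1 ≤ j ∧ i + j = k - 1 ∧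
    G' = i ::ₘ j ::ₘ G.erase k)

/-- The function `t` on single heaps for 4.7. -/
def t47 (k : ℕ) : ℕ :=
  if k = 1 then 0 else if k = 2 then 1 else k - 3

/-- The function `w` on single heaps for 4.7. -/
def w47 (k : ℕ) : ℕ :=
  if k ≤ 4 then 0 else if k = 5 then 1 else k - 6

/-- `t` extended additively to positions. -/
def tPos47 (G : Multiset ℕ) : ℕ := (G.map t47).sum

/-! ### Invariants of positions -/

/-- The threshold `w + t` of a single heap, set to `0` for heaps of size at most `4`. -/
def cHeap (k : ℕ) : ℕ := if k ≤ 4 then 0 else if k = 5 then 3 else 2 * k - 9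

/-- Closed form of the Grundy value, in terms of the number of beans and the number of heaps. -/
def grun (G : Multiset ℕ) : ℕ := G.sum % 2 + 2 * ((G.sum + Multiset.card G) % 2)

/-- A termination measure for the game. -/
def meas47 (G : Multiset ℕ) : ℕ := (G.map (fun k => 2 * k - 1)).sum

/-- The claimed P-positions, described without singling out a largest heap. -/
def Good (G : Multiset ℕ) : Prop :=
  (tPos47 G = 0 ∧ grun G = 1) ∨
  (tPos47 G ≠ 0 ∧ (∀ j ∈ G, cHeap j ≤ tPos47 G) ∧ grun G = 0) ∨
  (tPos47 G ≠ 0 ∧ (∃ j ∈ G, tPos47 G + 2 ≤ cHeap j) ∧ grun G = 3)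

lemma t47_spec (k : ℕ) : (k ≤ 1 ∧ t47 k = 0) ∨ (k = 2 ∧ t47 k = 1) ∨ (3 ≤ k ∧ t47 k + 3 = k) := by
  unfold t47; split_ifs <;> omega

lemma cHeap_spec (k : ℕ) :
    (k ≤ 4 ∧ cHeap k = 0) ∨ (k = 5 ∧ cHeap k = 3) ∨ (6 ≤ k ∧ cHeap k + 9 = 2 * k) := by
  unfold cHeap; split_ifs <;> omega

lemma w47_spec (k : ℕ) :
    (k ≤ 4 ∧ w47 k = 0) ∨ (k = 5 ∧ w47 k = 1) ∨ (6 ≤ k ∧ w47 k + 6 = k) := by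
  unfold w47; split_ifs <;> omega

lemma tPos47_cons (k : ℕ) (X : Multiset ℕ) : tPos47 (k ::ₘ X) = t47 k + tPos47 X := by
  simp [tPos47]

lemma meas47_cons (k : ℕ) (X : Multiset ℕ) : meas47 (k ::ₘ X) = (2 * k - 1) + meas47 X := by
  simp [meas47]

lemma t47_le_of_mem {j : ℕ} {X : Multiset ℕ} (h : j ∈ X) : t47 j ≤ tPos47 X := by
  obtain ⟨Y, rfl⟩ := Multiset.exists_cons_of_mem h
  rw [tPos47_cons]; omega

lemma exists_odd_heap (X : Multiset ℕ) (h : X.sum % 2 = 1) : ∃ j ∈ X, j % 2 = 1 := by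
  induction X using Multiset.induction with
  | empty => simp at h
  | cons a s ih =>
    rw [Multiset.sum_cons] at h
    by_cases ha : a % 2 = 1
    · exact ⟨a, by simp, ha⟩
    · obtain ⟨j, hj, hj2⟩ := ih (by omega)
      exact ⟨j, by simp [hj], hj2⟩

lemma exists_even_heap (X : Multiset ℕ) (h : (X.sum + Multiset.card X) % 2 = 1) :
    ∃ j ∈ X, j % 2 = 0 := by
  induction X using Multiset.induction with
  | empty => simp at h
  | cons a s ih =>
    rw [Multiset.sum_cons, Multiset.card_cons] at h
    by_cases ha : a % 2 = 0
    · exact ⟨a, by simp, ha⟩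
    · obtain ⟨j, hj, hj2⟩ := ih (by omega)
      exact ⟨j, by simp [hj], hj2⟩

lemma exists_t47_pos (X : Multiset ℕ) (h : tPos47 X ≠ 0) : ∃ j ∈ X, 1 ≤ t47 j := by
  induction X using Multiset.induction with
  | empty => simp [tPos47] at h
  | cons a s ih =>
    rw [tPos47_cons] at h
    by_cases ha : 1 ≤ t47 a
    · exact ⟨a, by simp, ha⟩
    · obtain ⟨j, hj, hj2⟩ := ih (by omega)
      exact ⟨j, by simp [hj], hj2⟩

/-- If `t` vanishes then all heaps have size `1` or `3`, so there is no even heap. -/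
lemma even_of_tPos47_eq_zero {X : Multiset ℕ} (hpos : ∀ j ∈ X, 1 ≤ j) (h : tPos47 X = 0) :
    (X.sum + Multiset.card X) % 2 = 0 := by
  by_contra hc
  obtain ⟨j, hj, hj2⟩ := exists_even_heap X (by omega)
  have h1 := hpos j hj
  have h2 := t47_le_of_mem hj
  have h3 := t47_spec j
  omega

/-! ### Moves -/

lemma move_split {k i j : ℕ} (X : Multiset ℕ) (hi : 1 ≤ i) (hj : 1 ≤ j) (h : i + j = k) :
    Move47 (k ::ₘ X) (i ::ₘ j ::ₘ X) :=
  Or.inl ⟨k, by simp, i, j, hi, hj, h, by simp⟩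

lemma move_remove (X : Multiset ℕ) : Move47 (1 ::ₘ X) X :=
  Or.inr (Or.inl ⟨by simp, by simp⟩)

lemma move_dec {k i : ℕ} (X : Multiset ℕ) (hi : 1 ≤ i) (h : i + 1 = k) :
    Move47 (k ::ₘ X) (i ::ₘ X) :=
  Or.inr (Or.inr (Or.inl ⟨k, by simp, by omega, by simp [← h]⟩))

lemma move_dec_split {k i j : ℕ} (X : Multiset ℕ) (hi : 1 ≤ i) (hj : 1 ≤ j) (h : i + j + 1 = k) :
    Move47 (k ::ₘ X) (i ::ₘ j ::ₘ X) :=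
  Or.inr (Or.inr (Or.inr ⟨k, by simp, by omega, i, j, hi, hj, by omega, by simp⟩))

/-- Moves in a form isolating the heap `k` that is played on from the rest `X`. -/
lemma move_cases {G G' : Multiset ℕ} (h : Move47 G G') : ∃ k X, G = k ::ₘ X ∧
    ((∃ i j, 1 ≤ i ∧ 1 ≤ j ∧ i + j = k ∧ G' = i ::ₘ j ::ₘ X) ∨
     (k = 1 ∧ G' = X) ∨
     (∃ i, 1 ≤ i ∧ i + 1 = k ∧ G' = i ::ₘ X) ∨
     (∃ i j, 1 ≤ i ∧ 1 ≤ j ∧ i + j + 1 = k ∧ G' = i ::ₘ j ::ₘ X)) := by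
  rcases h with ⟨k, hk, i, j, hi, hj, hs, rfl⟩ | ⟨hk, rfl⟩ | ⟨k, hk, h2, rfl⟩ |
    ⟨k, hk, h3, i, j, hi, hj, hs, rfl⟩
  · exact ⟨k, G.erase k, (Multiset.cons_erase hk).symm, Or.inl ⟨i, j, hi, hj, hs, rfl⟩⟩
  · exact ⟨1, G.erase 1, (Multiset.cons_erase hk).symm, Or.inr (Or.inl ⟨rfl, rfl⟩)⟩
  · exact ⟨k, G.erase k, (Multiset.cons_erase hk).symm,
      Or.inr (Or.inr (Or.inl ⟨k - 1, by omega, by omega, rfl⟩))⟩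
  · exact ⟨k, G.erase k, (Multiset.cons_erase hk).symm,
      Or.inr (Or.inr (Or.inr ⟨i, j, hi, hj, by omega, rfl⟩))⟩

lemma meas47_lt_of_move {G G' : Multiset ℕ} (h : Move47 G G') : meas47 G' < meas47 G := by
  obtain ⟨k, X, rfl, ⟨i, j, hi, hj, hs, rfl⟩ | ⟨rfl, rfl⟩ | ⟨i, hi, hs, rfl⟩ |
    ⟨i, j, hi, hj, hs, rfl⟩⟩ := move_cases h <;> simp only [meas47_cons] <;> omega

lemma pos_of_move {G G' : Multiset ℕ} (h : Move47 G G') (hpos : ∀ j ∈ G, 1 ≤ j) :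
    ∀ j ∈ G', 1 ≤ j := by
  obtain ⟨k, X, rfl, ⟨i, j, hi, hj, hs, rfl⟩ | ⟨rfl, rfl⟩ | ⟨i, hi, hs, rfl⟩ |
    ⟨i, j, hi, hj, hs, rfl⟩⟩ := move_cases h <;>
  simp only [Multiset.forall_mem_cons] at hpos ⊢
  · exact ⟨hi, hj, hpos.2⟩
  · exact hpos.2
  · exact ⟨hi, hpos.2⟩
  · exact ⟨hi, hj, hpos.2⟩

lemma exists_move {G : Multiset ℕ} (hpos : ∀ j ∈ G, 1 ≤ j) (hne : G ≠ 0) : ∃ G', Move47 G G' := by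
  obtain ⟨k, hk⟩ := Multiset.exists_mem_of_ne_zero hne
  have h1 := hpos k hk
  obtain ⟨X, rfl⟩ := Multiset.exists_cons_of_mem hk
  rcases Nat.lt_or_ge k 2 with h | h
  · obtain rfl : k = 1 := by omega
    exact ⟨X, move_remove X⟩
  · exact ⟨_, move_dec (i := k - 1) X (by omega) (by omega)⟩

/-! ### The Grundy function -/

lemma grun_ne_of_move {G G' : Multiset ℕ} (h : Move47 G G') : grun G' ≠ grun G := by
  obtain ⟨k, X, rfl, ⟨i, j, hi, hj, hs, rfl⟩ | ⟨rfl, rfl⟩ | ⟨i, hi, hs, rfl⟩ |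
    ⟨i, j, hi, hj, hs, rfl⟩⟩ := move_cases h <;>
  simp only [grun, Multiset.sum_cons, Multiset.card_cons] <;> omega

lemma exists_move_grun {G : Multiset ℕ} (hpos : ∀ j ∈ G, 1 ≤ j) {u : ℕ} (hu : u < grun G) :
    ∃ G', Move47 G G' ∧ grun G' = u := by
  by_cases hb : u / 2 = grun G / 2
  -- If the two Grundy values agree in the second bit, only the first bit must be flipped.
  · have hodd : G.sum % 2 = 1 := by simp only [grun] at hu hb; omega
    obtain ⟨h, hh, h2⟩ := exists_odd_heap G hodd
    obtain ⟨X, rfl⟩ := Multiset.exists_cons_of_mem hh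
    rcases Nat.lt_or_ge h 3 with h3 | h3
    · obtain rfl : h = 1 := by omega
      refine ⟨X, move_remove X, ?_⟩
      simp only [grun, Multiset.sum_cons, Multiset.card_cons] at *
      omega
    · refine ⟨_, move_dec_split (i := 1) (j := h - 2) X (by omega) (by omega) (by omega), ?_⟩
      simp only [grun, Multiset.sum_cons, Multiset.card_cons] at *
      omega
  · have heven : (G.sum + Multiset.card G) % 2 = 1 := by simp only [grun] at hu hb; omega
    obtain ⟨h, hh, h2⟩ := exists_even_heap G heven
    have h1 := hpos h hh
    obtain ⟨X, rfl⟩ := Multiset.exists_cons_of_mem hh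
    by_cases hl : u % 2 = grun (h ::ₘ X) % 2
    · refine ⟨_, move_split (i := 1) (j := h - 1) X (by omega) (by omega) (by omega), ?_⟩
      simp only [grun, Multiset.sum_cons, Multiset.card_cons] at *
      omega
    · refine ⟨_, move_dec (i := h - 1) X (by omega) (by omega), ?_⟩
      simp only [grun, Multiset.sum_cons, Multiset.card_cons] at *
      omega

lemma mex_eq {s : Set ℕ} {n : ℕ} (h1 : n ∉ s) (h2 : ∀ u < n, u ∈ s) : mex s = n := by
  apply le_antisymm
  · exact Nat.sInf_le h1
  · by_contra hlt
    have hm : sInf {n | n ∉ s} ∈ {n | n ∉ s} := Nat.sInf_mem ⟨n, h1⟩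
    exact hm (h2 _ (not_le.mp hlt))

lemma grundy_eq (g : Multiset ℕ → ℕ)
    (hg : ∀ G : Multiset ℕ, g G = mex {m | ∃ G', Move47 G G' ∧ g G' = m})
    (n : ℕ) : ∀ G : Multiset ℕ, meas47 G = n → (∀ j ∈ G, 1 ≤ j) → g G = grun G := by
  induction n using Nat.strong_induction_on with
  | _ n ih =>
    intro G hn hpos
    have key : ∀ G', Move47 G G' → g G' = grun G' := fun G' hm =>
      ih _ (hn ▸ meas47_lt_of_move hm) G' rfl (pos_of_move hm hpos)
    rw [hg]
    apply mex_eq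
    · rintro ⟨G', hm, he⟩
      rw [key G' hm] at he
      exact grun_ne_of_move hm he
    · intro u hu
      obtain ⟨K, hm, he⟩ := exists_move_grun hpos hu
      exact ⟨K, hm, by rw [key K hm, he]⟩

/-! ### No move between good positions -/

set_option maxHeartbeats 1000000 in
lemma not_good_of_move {G G' : Multiset ℕ} (h : Move47 G G')
    (hG : Good G) : ¬ Good G' := by
  intro hG'
  obtain ⟨k, X, rfl, hm⟩ := move_cases h
  have hX : ∀ j ∈ X, t47 j ≤ tPos47 X := fun j hj => t47_le_of_mem hj
  have hk := t47_spec k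
  have hck := cHeap_spec k
  -- In each case below, the parity of the numbers of beans and heaps excludes most pairs of clauses.
  rcases hm with ⟨i, j, hi, hj, hs, rfl⟩ | ⟨rfl, rfl⟩ | ⟨i, hi, hs, rfl⟩ |
    ⟨i, j, hi, hj, hs, rfl⟩ <;>
  simp only [Good, grun, tPos47_cons, Multiset.sum_cons, Multiset.card_cons,
    Multiset.mem_cons, forall_eq_or_imp, exists_eq_or_imp] at hG hG'
  · have hti := t47_spec i
    have htj := t47_spec j
    have hci := cHeap_spec i
    have hcj := cHeap_spec j
    rcases hG with ⟨a, b⟩ | ⟨a, ⟨a1, a2⟩, b⟩ | ⟨a, a1, b⟩ <;>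
    rcases hG' with ⟨a', b'⟩ | ⟨a', ⟨a1', a2'⟩, b'⟩ | ⟨a', a1', b'⟩ <;>
    try (clear hk hck hti htj hci hcj hX; omega)
    · clear b b'
      rcases a1' with h1 | h1 | ⟨x, hx, h1⟩
      · omega
      · omega
      · have := hX x hx
        have := t47_spec x
        have := cHeap_spec x
        omega
    · clear b b'
      rcases a1 with h1 | ⟨x, hx, h1⟩
      · omega
      · have := hX x hx
        have := t47_spec x
        have := cHeap_spec x
        omega
  · rcases hG with ⟨a, b⟩ | ⟨a, -, b⟩ | ⟨a, -, b⟩ <;>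
    rcases hG' with ⟨a', b'⟩ | ⟨a', -, b'⟩ | ⟨a', -, b'⟩ <;> omega
  · have hti := t47_spec i
    have hci := cHeap_spec i
    rcases hG with ⟨a, b⟩ | ⟨a, ⟨a1, a2⟩, b⟩ | ⟨a, a1, b⟩ <;>
    rcases hG' with ⟨a', b'⟩ | ⟨a', ⟨a1', a2'⟩, b'⟩ | ⟨a', a1', b'⟩ <;>
    try (clear hk hck hti hci hX; omega)
    · clear b b'
      rcases a1' with h1 | ⟨x, hx, h1⟩
      · omega
      · have := a2 x hx
        omega
    · clear b b'
      rcases a1 with h1 | ⟨x, hx, h1⟩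
      · omega
      · have := a2' x hx
        omega
  · have hti := t47_spec i
    have htj := t47_spec j
    have hci := cHeap_spec i
    have hcj := cHeap_spec j
    rcases hG with ⟨a, b⟩ | ⟨a, ⟨a1, a2⟩, b⟩ | ⟨a, a1, b⟩ <;>
    rcases hG' with ⟨a', b'⟩ | ⟨a', ⟨a1', a2'⟩, b'⟩ | ⟨a', a1', b'⟩ <;>
    try (clear hk hck hti htj hci hcj hX; omega)
    all_goals
      clear b' b
      omega

/-! ### Winning moves -/

/-- Winning moves when `t ≠ 0` and all heaps have size at most `4`.  Such positions satisfy the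
second clause of `Good` as soon as their Grundy value is `0`. -/
lemma exists_good_option_small {G : Multiset ℕ} (hpos : ∀ j ∈ G, 1 ≤ j) (h4 : ∀ j ∈ G, j ≤ 4)
    (hT : tPos47 G ≠ 0) (hg : grun G ≠ 0) : ∃ G', Move47 G G' ∧ Good G' := by
  have t1 : t47 1 = 0 := rfl
  have hc : ∀ j, j ≤ 4 → cHeap j = 0 := fun j hj => if_pos hj
  by_cases hb : (G.sum + Multiset.card G) % 2 = 0
  · obtain ⟨h, hh, h2⟩ := exists_odd_heap G (by simp only [grun] at hg; omega)
    have hh4 := h4 h hh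
    obtain ⟨X, rfl⟩ := Multiset.exists_cons_of_mem hh
    have hX : ∀ j ∈ X, cHeap j = 0 := fun j hj => hc j (h4 j (by simp [hj]))
    have hth := t47_spec h
    rcases Nat.lt_or_ge h 3 with h3 | h3
    · obtain rfl : h = 1 := by omega
      refine ⟨X, move_remove X, Or.inr (Or.inl ⟨?_, ?_, ?_⟩)⟩
      · rw [tPos47_cons] at hT; omega
      · intro j hj; rw [hX j hj]; omega
      · simp only [grun, Multiset.sum_cons, Multiset.card_cons] at *; omega
    · refine ⟨_, move_dec_split (i := 1) (j := 1) X le_rfl le_rfl (by omega),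
        Or.inr (Or.inl ⟨?_, ?_, ?_⟩)⟩
      · simp only [tPos47_cons] at *; omega
      · simp only [Multiset.forall_mem_cons, hc 1 (by omega)]
        refine ⟨by omega, by omega, fun j hj => ?_⟩
        rw [hX j hj]; omega
      · simp only [grun, Multiset.sum_cons, Multiset.card_cons] at *; omega
  · obtain ⟨h, hh, h2⟩ := exists_even_heap G (by omega)
    have hh1 := hpos h hh
    have hh4 := h4 h hh
    obtain ⟨X, rfl⟩ := Multiset.exists_cons_of_mem hh
    have hX : ∀ j ∈ X, cHeap j = 0 := fun j hj => hc j (h4 j (by simp [hj]))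
    have hth := t47_spec h
    have hth' := t47_spec (h - 1)
    have mvs := move_split (i := 1) (j := h - 1) X (by omega) (by omega) (show _ = h by omega)
    have mvd := move_dec (i := h - 1) X (by omega) (show _ = h by omega)
    -- Both moves lower `t` by one; the last even heap must be used to reach Grundy value `1`.
    by_cases hT1 : tPos47 (h ::ₘ X) = 1
    · by_cases hs : (h ::ₘ X).sum % 2 = 0
      · refine ⟨_, mvd, Or.inl ⟨?_, ?_⟩⟩
        · simp only [tPos47_cons] at *; omega
        · simp only [grun, Multiset.sum_cons, Multiset.card_cons] at *; omega
      · refine ⟨_, mvs, Or.inl ⟨?_, ?_⟩⟩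
        · simp only [tPos47_cons] at *; omega
        · simp only [grun, Multiset.sum_cons, Multiset.card_cons] at *; omega
    · by_cases hs : (h ::ₘ X).sum % 2 = 0
      · refine ⟨_, mvs, Or.inr (Or.inl ⟨?_, ?_, ?_⟩)⟩
        · simp only [tPos47_cons] at *; omega
        · simp only [Multiset.forall_mem_cons, hc 1 (by omega), hc (h - 1) (by omega)]
          refine ⟨by omega, by omega, fun j hj => ?_⟩
          rw [hX j hj]; omega
        · simp only [grun, Multiset.sum_cons, Multiset.card_cons] at *; omega
      · refine ⟨_, mvd, Or.inr (Or.inl ⟨?_, ?_, ?_⟩)⟩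
        · simp only [tPos47_cons] at *; omega
        · simp only [Multiset.forall_mem_cons, hc (h - 1) (by omega)]
          refine ⟨by omega, fun j hj => ?_⟩
          rw [hX j hj]; omega
        · simp only [grun, Multiset.sum_cons, Multiset.card_cons] at *; omega

/-- A position of two pieces `i`, `j` and a rest `X` satisfies the second clause of `Good`. -/
lemma good_two {i j : ℕ} {X : Multiset ℕ} (h0 : t47 i + (t47 j + tPos47 X) ≠ 0)
    (hi : cHeap i ≤ t47 i + (t47 j + tPos47 X)) (hj : cHeap j ≤ t47 i + (t47 j + tPos47 X))
    (hX : ∀ x ∈ X, cHeap x ≤ t47 i + (t47 j + tPos47 X))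
    (hg : (i + (j + X.sum)) % 2 +
      2 * ((i + (j + X.sum) + (Multiset.card X + 1 + 1)) % 2) = 0) :
    Good (i ::ₘ j ::ₘ X) := by
  refine Or.inr (Or.inl ?_)
  simp only [grun, tPos47_cons, Multiset.sum_cons, Multiset.card_cons, Multiset.forall_mem_cons]
  exact ⟨h0, ⟨hi, hj, hX⟩, hg⟩

/-- A position of a piece `i` and a rest `X` satisfies the second clause of `Good`. -/
lemma good_one {i : ℕ} {X : Multiset ℕ} (h0 : t47 i + tPos47 X ≠ 0)
    (hi : cHeap i ≤ t47 i + tPos47 X)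
    (hX : ∀ x ∈ X, cHeap x ≤ t47 i + tPos47 X)
    (hg : (i + X.sum) % 2 + 2 * ((i + X.sum + (Multiset.card X + 1)) % 2) = 0) :
    Good (i ::ₘ X) := by
  refine Or.inr (Or.inl ?_)
  simp only [grun, tPos47_cons, Multiset.sum_cons, Multiset.card_cons, Multiset.forall_mem_cons]
  exact ⟨h0, ⟨hi, hX⟩, hg⟩

/-- Winning moves when all thresholds are at most `t` and the largest heap has size at
least `5`. -/
lemma exists_good_option_low {k : ℕ} {X : Multiset ℕ} (hk5 : 5 ≤ k)
    (hXk : ∀ j ∈ X, j ≤ k) (hL : cHeap k ≤ t47 k + tPos47 X) (hg : grun (k ::ₘ X) ≠ 0) :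
    ∃ G', Move47 (k ::ₘ X) G' ∧ Good G' := by
  have hX : ∀ j ∈ X, j ≤ k ∧ t47 j ≤ tPos47 X ∧
      ((j ≤ 1 ∧ t47 j = 0) ∨ (j = 2 ∧ t47 j = 1) ∨ (3 ≤ j ∧ t47 j + 3 = j)) ∧
      ((j ≤ 4 ∧ cHeap j = 0) ∨ (j = 5 ∧ cHeap j = 3) ∨ (6 ≤ j ∧ cHeap j + 9 = 2 * j)) :=
    fun j hj => ⟨hXk j hj, t47_le_of_mem hj, t47_spec j, cHeap_spec j⟩
  have t1 : t47 1 = 0 := rfl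
  have t2 : t47 2 = 1 := rfl
  have t3 : t47 3 = 0 := rfl
  have t4 : t47 4 = 1 := rfl
  have c1 : cHeap 1 = 0 := rfl
  have c2 : cHeap 2 = 0 := rfl
  have c4 : cHeap 4 = 0 := rfl
  have htk := t47_spec k
  have hck := cHeap_spec k
  have htk1 := t47_spec (k - 1)
  have hck1 := cHeap_spec (k - 1)
  have htk2 := t47_spec (k - 2)
  have hck2 := cHeap_spec (k - 2)
  simp only [grun, Multiset.sum_cons, Multiset.card_cons] at hg
  have hcase : (k + X.sum) % 2 = 1 ∧ (k + X.sum + (Multiset.card X + 1)) % 2 = 0 ∨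
      (k + X.sum) % 2 = 0 ∧ (k + X.sum + (Multiset.card X + 1)) % 2 = 1 ∨
      (k + X.sum) % 2 = 1 ∧ (k + X.sum + (Multiset.card X + 1)) % 2 = 1 := by omega
  rcases hcase with ⟨e1, e2⟩ | ⟨e1, e2⟩ | ⟨e1, e2⟩
  · by_cases h5 : k = 5
    · refine ⟨_, move_dec_split (i := 2) (j := 2) X (by omega) (by omega) (by omega),
        good_two (by omega) (by omega) (by omega) (fun x hx => ?_) (by omega)⟩
      have := hX x hx; omega
    · refine ⟨_, move_dec_split (i := 1) (j := k - 2) X (by omega) (by omega) (by omega),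
        good_two (by omega) (by omega) (by omega) (fun x hx => ?_) (by omega)⟩
      have := hX x hx; omega
  · by_cases h6 : k = 6
    · refine ⟨_, move_split (i := 2) (j := 4) X (by omega) (by omega) (by omega),
        good_two (by omega) (by omega) (by omega) (fun x hx => ?_) (by omega)⟩
      have := hX x hx; omega
    · refine ⟨_, move_split (i := 1) (j := k - 1) X (by omega) (by omega) (by omega),
        good_two (by omega) (by omega) (by omega) (fun x hx => ?_) (by omega)⟩
      have := hX x hx; omega
  · by_cases h6 : k = 6 ∧ tPos47 X = 0
    · refine ⟨_, move_split (i := 3) (j := 3) X (by omega) (by omega) (by omega), Or.inl ?_⟩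
      simp only [grun, tPos47_cons, Multiset.sum_cons, Multiset.card_cons]
      omega
    · refine ⟨_, move_dec (i := k - 1) X (by omega) (by omega),
        good_one (by omega) (by omega) (fun x hx => ?_) (by omega)⟩
      have := hX x hx; omega

/-- When some heap has threshold `t + 1` or more, Grundy value `0` is beaten by lowering `t` by one
in a move `h → h - 1` on another heap, if the other heaps do not all have `t = 0`. -/
lemma exists_good_option_dec {k : ℕ} {X : Multiset ℕ} (hpos : ∀ j ∈ X, 1 ≤ j)
    (hc : t47 k + tPos47 X + 1 ≤ cHeap k) (hT : t47 k ≠ 0) (hTX : tPos47 X ≠ 0)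
    (hg : grun (k ::ₘ X) = 0) : ∃ G', Move47 (k ::ₘ X) G' ∧ Good G' := by
  obtain ⟨h, hh, h1⟩ := exists_t47_pos X hTX
  have hh1 := hpos h hh
  obtain ⟨Y, rfl⟩ := Multiset.exists_cons_of_mem hh
  have ht := t47_spec h
  have ht' := t47_spec (h - 1)
  rw [Multiset.cons_swap]
  refine ⟨_, move_dec (i := h - 1) _ (by omega) (by omega), Or.inr (Or.inr ⟨?_, ⟨k, ?_, ?_⟩, ?_⟩)⟩
  · simp only [tPos47_cons]; omega
  · simp
  · simp only [tPos47_cons] at *; omega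
  · simp only [grun, Multiset.sum_cons, Multiset.card_cons] at *; omega

/-- Winning moves when some heap `k`, necessarily the largest, has threshold `t + 1`. -/
lemma exists_good_option_mid {k : ℕ} {X : Multiset ℕ} (hpos : ∀ j ∈ X, 1 ≤ j)
    (hM : cHeap k = t47 k + tPos47 X + 1) : ∃ G', Move47 (k ::ₘ X) G' ∧ Good G' := by
  have hX : ∀ j ∈ X, t47 j ≤ tPos47 X ∧
      ((j ≤ 1 ∧ t47 j = 0) ∨ (j = 2 ∧ t47 j = 1) ∨ (3 ≤ j ∧ t47 j + 3 = j)) ∧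
      ((j ≤ 4 ∧ cHeap j = 0) ∨ (j = 5 ∧ cHeap j = 3) ∨ (6 ≤ j ∧ cHeap j + 9 = 2 * j)) :=
    fun j hj => ⟨t47_le_of_mem hj, t47_spec j, cHeap_spec j⟩
  have t1 : t47 1 = 0 := rfl
  have t2 : t47 2 = 1 := rfl
  have t3 : t47 3 = 0 := rfl
  have t4 : t47 4 = 1 := rfl
  have c1 : cHeap 1 = 0 := rfl
  have c2 : cHeap 2 = 0 := rfl
  have c4 : cHeap 4 = 0 := rfl
  have htk := t47_spec k
  have hck := cHeap_spec k
  by_cases h0 : tPos47 X = 0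
  · -- Here `k` is `5` or `7` and all other heaps have size `1` or `3`.
    have hk57 : k = 5 ∨ k = 7 := by omega
    have hpar := even_of_tPos47_eq_zero hpos h0
    rcases Nat.mod_two_eq_zero_or_one X.sum with hs | hs <;> rcases hk57 with rfl | rfl
    · refine ⟨_, move_dec_split (i := 2) (j := 2) X (by omega) (by omega) (by omega),
        good_two (by omega) (by omega) (by omega) (fun x hx => ?_) (by omega)⟩
      have := hX x hx; omega
    · refine ⟨_, move_dec_split (i := 2) (j := 4) X (by omega) (by omega) (by omega),
        good_two (by omega) (by omega) (by omega) (fun x hx => ?_) (by omega)⟩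
      have := hX x hx; omega
    · refine ⟨_, move_dec_split (i := 1) (j := 3) X (by omega) (by omega) (by omega), Or.inl ?_⟩
      simp only [grun, tPos47_cons, Multiset.sum_cons, Multiset.card_cons]
      omega
    · refine ⟨_, move_dec_split (i := 3) (j := 3) X (by omega) (by omega) (by omega), Or.inl ?_⟩
      simp only [grun, tPos47_cons, Multiset.sum_cons, Multiset.card_cons]
      omega
  · by_cases hg : grun (k ::ₘ X) = 0
    · exact exists_good_option_dec hpos (by omega) (by omega) h0 hg
    have htk1 := t47_spec (k - 1)
    have hck1 := cHeap_spec (k - 1)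
    have htk2 := t47_spec (k - 2)
    have hck2 := cHeap_spec (k - 2)
    simp only [grun, Multiset.sum_cons, Multiset.card_cons] at hg
    have hcase : (k + X.sum) % 2 = 1 ∧ (k + X.sum + (Multiset.card X + 1)) % 2 = 0 ∨
        (k + X.sum) % 2 = 0 ∧ (k + X.sum + (Multiset.card X + 1)) % 2 = 1 ∨
        (k + X.sum) % 2 = 1 ∧ (k + X.sum + (Multiset.card X + 1)) % 2 = 1 := by omega
    rcases hcase with ⟨e1, e2⟩ | ⟨e1, e2⟩ | ⟨e1, e2⟩
    · refine ⟨_, move_dec_split (i := 1) (j := k - 2) X (by omega) (by omega) (by omega),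
        good_two (by omega) (by omega) (by omega) (fun x hx => ?_) (by omega)⟩
      have := hX x hx; omega
    · refine ⟨_, move_split (i := 1) (j := k - 1) X (by omega) (by omega) (by omega),
        good_two (by omega) (by omega) (by omega) (fun x hx => ?_) (by omega)⟩
      have := hX x hx; omega
    · refine ⟨_, move_dec (i := k - 1) X (by omega) (by omega),
        good_one (by omega) (by omega) (fun x hx => ?_) (by omega)⟩
      have := hX x hx; omega

/-- Winning moves when some heap `k`, necessarily the largest, has threshold at least `t + 2`:
unless the Grundy value is `0`, this heap is cut into two nearly equal pieces. -/
lemma exists_good_option_high {k : ℕ} {X : Multiset ℕ} (hpos : ∀ j ∈ X, 1 ≤ j)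
    (hR : t47 k + tPos47 X + 2 ≤ cHeap k) (hg3 : grun (k ::ₘ X) ≠ 3) :
    ∃ G', Move47 (k ::ₘ X) G' ∧ Good G' := by
  have hX : ∀ j ∈ X, t47 j ≤ tPos47 X ∧
      ((j ≤ 1 ∧ t47 j = 0) ∨ (j = 2 ∧ t47 j = 1) ∨ (3 ≤ j ∧ t47 j + 3 = j)) ∧
      ((j ≤ 4 ∧ cHeap j = 0) ∨ (j = 5 ∧ cHeap j = 3) ∨ (6 ≤ j ∧ cHeap j + 9 = 2 * j)) :=
    fun j hj => ⟨t47_le_of_mem hj, t47_spec j, cHeap_spec j⟩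
  have htk := t47_spec k
  have hck := cHeap_spec k
  have hk8 : 8 ≤ k := by omega
  by_cases hg : grun (k ::ₘ X) = 0
  · by_cases h0 : tPos47 X = 0
    · have hpar := even_of_tPos47_eq_zero hpos h0
      have htk1 := t47_spec (k - 1)
      have hck1 := cHeap_spec (k - 1)
      simp only [grun, Multiset.sum_cons, Multiset.card_cons] at hg
      refine ⟨_, move_dec (i := k - 1) X (by omega) (by omega),
        Or.inr (Or.inr ⟨?_, ⟨k - 1, by simp, ?_⟩, ?_⟩)⟩
      · simp only [tPos47_cons]; omega
      · simp only [tPos47_cons]; omega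
      · simp only [grun, Multiset.sum_cons, Multiset.card_cons]; omega
    · exact exists_good_option_dec hpos (by omega) (by omega) h0 hg
  · simp only [grun, Multiset.sum_cons, Multiset.card_cons] at hg hg3
    have hcase : (k + X.sum) % 2 = 1 ∧ (k + X.sum + (Multiset.card X + 1)) % 2 = 0 ∨
        (k + X.sum) % 2 = 0 ∧ (k + X.sum + (Multiset.card X + 1)) % 2 = 1 := by omega
    rcases hcase with ⟨e1, e2⟩ | ⟨e1, e2⟩
    · obtain ⟨i, j, hij, hle, hge⟩ : ∃ i j, i + j + 1 = k ∧ i ≤ j ∧ j ≤ i + 1 :=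
        ⟨(k - 1) / 2, k - 1 - (k - 1) / 2, by omega, by omega, by omega⟩
      have hti := t47_spec i
      have hci := cHeap_spec i
      have htj := t47_spec j
      have hcj := cHeap_spec j
      refine ⟨_, move_dec_split (i := i) (j := j) X (by omega) (by omega) (by omega),
        good_two (by omega) (by omega) (by omega) (fun x hx => ?_) (by omega)⟩
      have := hX x hx; omega
    · obtain ⟨i, j, hij, hle, hge⟩ : ∃ i j, i + j = k ∧ i ≤ j ∧ j ≤ i + 1 :=
        ⟨k / 2, k - k / 2, by omega, by omega, by omega⟩
      have hti := t47_spec i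
      have hci := cHeap_spec i
      have htj := t47_spec j
      have hcj := cHeap_spec j
      refine ⟨_, move_split (i := i) (j := j) X (by omega) (by omega) (by omega),
        good_two (by omega) (by omega) (by omega) (fun x hx => ?_) (by omega)⟩
      have := hX x hx; omega

lemma cHeap_mono {i j : ℕ} (h : i ≤ j) : cHeap i ≤ cHeap j := by
  have := cHeap_spec i
  have := cHeap_spec j
  omega

lemma exists_good_option {G : Multiset ℕ} (hpos : ∀ j ∈ G, 1 ≤ j) (hne : G ≠ 0)
    (hG : ¬ Good G) : ∃ G', Move47 G G' ∧ Good G' := by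
  obtain ⟨k, hk, hmax⟩ : ∃ k ∈ G, ∀ j ∈ G, j ≤ k := by
    obtain ⟨k, hk, hm⟩ := Finset.exists_max_image G.toFinset id
      (by simpa [Finset.nonempty_iff_ne_empty] using hne)
    exact ⟨k, by simpa using hk, fun j hj => hm j (by simpa using hj)⟩
  obtain ⟨X, rfl⟩ := Multiset.exists_cons_of_mem hk
  have hposX : ∀ j ∈ X, 1 ≤ j := fun j hj => hpos j (by simp [hj])
  have hXk : ∀ j ∈ X, j ≤ k := fun j hj => hmax j (by simp [hj])
  have hk1 := hpos k hk
  by_cases hT : tPos47 (k ::ₘ X) = 0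
  · have hpar := even_of_tPos47_eq_zero hpos hT
    have hg : grun (k ::ₘ X) ≠ 1 := fun h => hG (Or.inl ⟨hT, h⟩)
    have t1 : t47 1 = 0 := rfl
    have htk := t47_spec k
    have hT' := hT
    rw [tPos47_cons] at hT'
    have hk13 : k = 1 ∨ k = 3 := by omega
    rcases hk13 with rfl | rfl
    · refine ⟨X, move_remove X, Or.inl ⟨by omega, ?_⟩⟩
      simp only [grun, Multiset.sum_cons, Multiset.card_cons] at *; omega
    · refine ⟨_, move_dec_split (i := 1) (j := 1) X le_rfl le_rfl (by omega), Or.inl ⟨?_, ?_⟩⟩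
      · simp only [tPos47_cons]; omega
      · simp only [grun, Multiset.sum_cons, Multiset.card_cons] at *; omega
  · rcases Nat.lt_trichotomy (cHeap k) (tPos47 (k ::ₘ X) + 1) with h | h | h
    · have hg : grun (k ::ₘ X) ≠ 0 := fun h0 => hG (Or.inr (Or.inl ⟨hT, fun j hj =>
        (cHeap_mono (hmax j hj)).trans (by omega), h0⟩))
      rcases Nat.lt_or_ge k 5 with h5 | h5
      · exact exists_good_option_small hpos
          (fun j hj => (hmax j hj).trans (by omega)) hT hg
      · rw [tPos47_cons] at h
        exact exists_good_option_low h5 hXk (by omega) hg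
    · rw [tPos47_cons] at h
      exact exists_good_option_mid hposX h
    · have hg : grun (k ::ₘ X) ≠ 3 := fun h0 => hG (Or.inr (Or.inr ⟨hT, ⟨k, hk, h⟩, h0⟩))
      rw [tPos47_cons] at h
      exact exists_good_option_high hposX (by omega) hg

/-! ### The characterization -/

lemma ppos_iff_good (PP : Multiset ℕ → Prop)
    (hPP : ∀ G : Multiset ℕ,
      PP G ↔ ((∃ G', Move47 G G') ∧ ∀ G', Move47 G G' → ¬ PP G'))
    (n : ℕ) : ∀ G : Multiset ℕ, meas47 G = n → (∀ j ∈ G, 1 ≤ j) → (PP G ↔ Good G) := by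
  induction n using Nat.strong_induction_on with
  | _ n ih =>
    intro G hn hpos
    have key : ∀ G', Move47 G G' → (PP G' ↔ Good G') := fun G' hm =>
      ih _ (hn ▸ meas47_lt_of_move hm) G' rfl (pos_of_move hm hpos)
    rw [hPP]
    constructor
    · rintro ⟨⟨G', hm⟩, hall⟩
      by_contra hG
      have hne : G ≠ 0 := by
        rintro rfl
        obtain ⟨k, X, h, -⟩ := move_cases hm
        exact Multiset.zero_ne_cons h
      obtain ⟨G'', hm', hG''⟩ := exists_good_option hpos hne hG
      exact hall G'' hm' ((key G'' hm').2 hG'')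
    · intro hG
      have hne : G ≠ 0 := by
        rintro rfl
        simp [Good, grun, tPos47] at hG
      exact ⟨exists_move hpos hne, fun K hm h => not_good_of_move hm hG ((key K hm).1 h)⟩

/-- Allemang's characterization of the misère P-positions of 4.7.  Here `PP` is
the misère P-position predicate (a position is a P-position iff it has at
least one option and every option is an N-position), and `g` is the
normal-play Grundy function (characterized by the mex recursion). `G` is a
nonempty position with all heaps positive, `k` is a heap of maximal size in
`G`, and `X = G.erase k`. -/
theorem ppos47_characterization
    (g : Multiset ℕ → ℕ)
    (hg : ∀ G : Multiset ℕ, g G = mex {m | ∃ G', Move47 G G' ∧ g G' = m})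
    (PP : Multiset ℕ → Prop)
    (hPP : ∀ G : Multiset ℕ,
      PP G ↔ ((∃ G', Move47 G G') ∧ ∀ G', Move47 G G' → ¬ PP G'))
    (G : Multiset ℕ) (hpos : ∀ j ∈ G, 1 ≤ j)
    (k : ℕ) (hk : k ∈ G) (hmax : ∀ j ∈ G, j ≤ k) :
    PP G ↔
      (tPos47 G = 0 ∧ g G = 1) ∨
      (tPos47 G ≠ 0 ∧ w47 k ≤ tPos47 (G.erase k) ∧ g G = 0) ∨
      (tPos47 G ≠ 0 ∧ tPos47 (G.erase k) + 2 ≤ w47 k ∧ g G = 3) := by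
  rw [ppos_iff_good PP hPP _ G rfl hpos, grundy_eq g hg _ G rfl hpos]
  have hT : tPos47 G = t47 k + tPos47 (G.erase k) := by
    rw [← tPos47_cons, Multiset.cons_erase hk]
  have ht := t47_spec k
  have hw := w47_spec k
  have hc := cHeap_spec k
  have h2 : tPos47 G ≠ 0 → ((∀ j ∈ G, cHeap j ≤ tPos47 G) ↔ w47 k ≤ tPos47 (G.erase k)) := by
    intro h0
    constructor
    · intro h
      have := h k hk
      omega
    · intro h j hj
      have := cHeap_mono (hmax j hj)
      omega
  have h3 : (∃ j ∈ G, tPos47 G + 2 ≤ cHeap j) ↔ tPos47 (G.erase k) + 2 ≤ w47 k := by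
    constructor
    · rintro ⟨j, hj, h⟩
      have := cHeap_mono (hmax j hj)
      omega
    · intro h
      exact ⟨k, hk, by omega⟩
  unfold Good
  rw [h3]
  by_cases h0 : tPos47 G = 0
  · simp [h0]
  · rw [h2 h0]
end

section
/- Let 𝓗 = {H_1, …, H_n} be a finite ordered set of generators with option assignment opts, and suppose that for every i, every option X₀ ∈ opts(H_i) is supported on generators H_j with j < i. Then for every X ∈ A and every option X' of X, X' <_lex X. -/
/-- The options of a position `X` in the free commutative monoid (of finite
multisets) over a set of generators, with respect to an assignment `opts` of
finitely many options to each generator: replace one occurrence of a generator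
`h` in `X` by one of its options `X₀`. -/
def IsOption {H : Type*} [DecidableEq H] (opts : H → Finset (Multiset H))
    (X X' : Multiset H) : Prop :=
  ∃ h ∈ X, ∃ X₀ ∈ opts h, X' = X.erase h + X₀

/-- The lexicographic order on multisets over generators `H_1, …, H_n`
(indexed by `Fin n`): `X <_lex Y` iff at the largest index at which the
multiplicities differ, `X` has the smaller multiplicity. -/
def LexLt {n : ℕ} (X Y : Multiset (Fin n)) : Prop :=
  ∃ i : Fin n, X.count i < Y.count i ∧ ∀ j : Fin n, i < j → X.count j = Y.count j

/-- If every option of each generator `H_i` is supported on generators `H_j`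
with `j < i`, then every option `X'` of every position `X` satisfies
`X' <_lex X`. -/
theorem option_lexLt {n : ℕ} (opts : Fin n → Finset (Multiset (Fin n)))
    (hopts : ∀ i : Fin n, ∀ X₀ ∈ opts i, ∀ j ∈ X₀, j < i) :
    ∀ X X' : Multiset (Fin n), IsOption opts X X' → LexLt X' X := by
  rintro X _ ⟨h, hX, X₀, hX₀, rfl⟩
  -- No generator of index at least `h` occurs in `X₀`, so `h` is the largest index of change.
  have hcount : ∀ j, h ≤ j → X₀.count j = 0 := fun j hj =>
    Multiset.count_eq_zero_of_notMem fun hmem => (hopts h X₀ hX₀ j hmem).not_ge hj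
  refine ⟨h, ?_, fun j hj => ?_⟩
  · have hpos := Multiset.count_pos.mpr hX
    rw [Multiset.count_add, hcount h le_rfl, Multiset.count_erase_self]
    omega
  · rw [Multiset.count_add, hcount j hj.le, Multiset.count_erase_of_ne hj.ne', add_zero]
end

section
/- Suppose Y is subsumed by X, i.e. X <_lex Y, Φ(X) = Φ(Y), and Φ''X ⊆ Φ''Y. Then for every Z ∈ A: X + Z <_lex Y + Z, Φ(X + Z) = Φ(Y + Z), and Φ''(X + Z) ⊆ Φ''(Y + Z); consequently, if Φ(Y + Z) ∉ P and no option of Y + Z is mapped into P by Φ, then also Φ(X + Z) ∉ P and no option of X + Z is mapped into P by Φ. -/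
/-- `Φ''X`: the set of values of `Φ` on the options of `X`. -/
def PhiImage {H : Type*} [DecidableEq H] (opts : H → Finset (Multiset H))
    {Q : Type*} (Φ : Multiset H → Q) (X : Multiset H) : Set Q :=
  {q | ∃ X', IsOption opts X X' ∧ Φ X' = q}

/-- A move in a sum of positions is a move in one of the summands. -/
theorem isOption_add_iff {H : Type*} [DecidableEq H] (opts : H → Finset (Multiset H))
    (X Z W : Multiset H) :
    IsOption opts (X + Z) W ↔
      (∃ X', IsOption opts X X' ∧ W = X' + Z) ∨ (∃ Z', IsOption opts Z Z' ∧ W = X + Z') := by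
  constructor
  · rintro ⟨h, hh, X₀, hX₀, rfl⟩
    rcases Multiset.mem_add.1 hh with hX | hZ
    · refine Or.inl ⟨X.erase h + X₀, ⟨h, hX, X₀, hX₀, rfl⟩, ?_⟩
      rw [Multiset.erase_add_left_pos _ hX, add_right_comm]
    · refine Or.inr ⟨Z.erase h + X₀, ⟨h, hZ, X₀, hX₀, rfl⟩, ?_⟩
      rw [Multiset.erase_add_right_pos _ hZ, add_assoc]
  · rintro (⟨_, ⟨h, hX, X₀, hX₀, rfl⟩, rfl⟩ | ⟨_, ⟨h, hZ, X₀, hX₀, rfl⟩, rfl⟩)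
    · refine ⟨h, Multiset.mem_add.2 (Or.inl hX), X₀, hX₀, ?_⟩
      rw [Multiset.erase_add_left_pos _ hX, add_right_comm]
    · refine ⟨h, Multiset.mem_add.2 (Or.inr hZ), X₀, hX₀, ?_⟩
      rw [Multiset.erase_add_right_pos _ hZ, add_assoc]

/-- If `Y` is subsumed by `X` (that is, `X <_lex Y`, `Φ X = Φ Y`, and
`Φ''X ⊆ Φ''Y`), then for every `Z`: `X + Z <_lex Y + Z`,
`Φ(X + Z) = Φ(Y + Z)`, and `Φ''(X + Z) ⊆ Φ''(Y + Z)`; consequently, if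
`Φ(Y + Z) ∉ P` and no option of `Y + Z` is mapped into `P` by `Φ`, then also
`Φ(X + Z) ∉ P` and no option of `X + Z` is mapped into `P` by `Φ`. -/
theorem subsumed_add {n : ℕ} (opts : Fin n → Finset (Multiset (Fin n)))
    {Q : Type*} [CommMonoid Q] (P : Set Q)
    (Φ : Multiset (Fin n) → Q)
    (hΦ0 : Φ 0 = 1)
    (hΦadd : ∀ X Y : Multiset (Fin n), Φ (X + Y) = Φ X * Φ Y)
    (X Y : Multiset (Fin n))
    (hlex : LexLt X Y) (hphi : Φ X = Φ Y)
    (hsub : PhiImage opts Φ X ⊆ PhiImage opts Φ Y) :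
    ∀ Z : Multiset (Fin n),
      LexLt (X + Z) (Y + Z) ∧
      Φ (X + Z) = Φ (Y + Z) ∧
      PhiImage opts Φ (X + Z) ⊆ PhiImage opts Φ (Y + Z) ∧
      ((Φ (Y + Z) ∉ P ∧ ∀ Y', IsOption opts (Y + Z) Y' → Φ Y' ∉ P) →
        (Φ (X + Z) ∉ P ∧ ∀ X', IsOption opts (X + Z) X' → Φ X' ∉ P)) := by
  intro Z
  have hval : Φ (X + Z) = Φ (Y + Z) := by rw [hΦadd, hΦadd, hphi]
  have himg : PhiImage opts Φ (X + Z) ⊆ PhiImage opts Φ (Y + Z) := by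
    rintro _ ⟨W, hW, rfl⟩
    rcases (isOption_add_iff opts X Z W).1 hW with ⟨X', hX', rfl⟩ | ⟨Z', hZ', rfl⟩
    · obtain ⟨Y', hY', hYX⟩ := hsub ⟨X', hX', rfl⟩
      exact ⟨Y' + Z, (isOption_add_iff opts Y Z _).2 (Or.inl ⟨Y', hY', rfl⟩), by
        rw [hΦadd, hΦadd, hYX]⟩
    · exact ⟨Y + Z', (isOption_add_iff opts Y Z _).2 (Or.inr ⟨Z', hZ', rfl⟩), by
        rw [hΦadd, hΦadd, hphi]⟩
  refine ⟨?_, hval, himg, ?_⟩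
  · obtain ⟨i, hi, hj⟩ := hlex
    refine ⟨i, ?_, fun j hij => ?_⟩
    · simpa only [Multiset.count_add, add_lt_add_iff_right] using hi
    · rw [Multiset.count_add, Multiset.count_add, hj j hij]
  · rintro ⟨hP, hopt⟩
    refine ⟨hval ▸ hP, fun X' hX' => ?_⟩
    obtain ⟨Y', hY', hYX⟩ := himg ⟨X', hX', rfl⟩
    exact hYX ▸ hopt Y' hY'
end
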